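/- Let k ≥ 0 and let K ⊆ ℝ³ be a nonempty bounded open set. The space { r ∈ P_k³ : ∫_K r(x)·(curl v)(x) dx = 0 for all v ∈ P_{k+1}³ } is a linear subspace of P_k³ of dimension 3·d_k − 3·d_{k+1} + d_{k+2} − 1, where d_j = C(j+3,3). -/

import Mathlib

open MvPolynomial MeasureTheory

/-- The `i`-th partial derivative as a linear map on polynomials in three variables. -/
noncomputable def pd (i : Fin 3) : MvPolynomial (Fin 3) ℝ →ₗ[ℝ] MvPolynomial (Fin 3) ℝ :=
  (pderiv i).toLinearMap

/-- The gradient of a polynomial, `grad p = (∂₁p, ∂₂p, ∂₃p)`, as a linear map. -/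
noncomputable def gradLM : MvPolynomial (Fin 3) ℝ →ₗ[ℝ] (Fin 3 → MvPolynomial (Fin 3) ℝ) :=
  LinearMap.pi fun i => pd i

/-- The curl of a polynomial vector field,
`curl F = (∂₂F₃ − ∂₃F₂, ∂₃F₁ − ∂₁F₃, ∂₁F₂ − ∂₂F₁)`, as a linear map. -/
noncomputable def curlLM : (Fin 3 → MvPolynomial (Fin 3) ℝ) →ₗ[ℝ] (Fin 3 → MvPolynomial (Fin 3) ℝ) :=
  LinearMap.pi
    ![pd 1 ∘ₗ LinearMap.proj 2 - pd 2 ∘ₗ LinearMap.proj 1,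
      pd 2 ∘ₗ LinearMap.proj 0 - pd 0 ∘ₗ LinearMap.proj 2,
      pd 0 ∘ₗ LinearMap.proj 1 - pd 1 ∘ₗ LinearMap.proj 0]

/-- `P_k³`: vector fields whose three components are polynomials of total degree ≤ k. -/
noncomputable def Pvec (k : ℕ) : Submodule ℝ (Fin 3 → MvPolynomial (Fin 3) ℝ) :=
  Submodule.pi Set.univ fun _ => restrictTotalDegree (Fin 3) ℝ k

/-- The `L²(K)` inner product `(F,G)_K = ∫_K F·G dx` of two polynomial vector fields. -/
noncomputable def ipK (K : Set (Fin 3 → ℝ)) (F G : Fin 3 → MvPolynomial (Fin 3) ℝ) : ℝ :=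
  ∫ x in K, ∑ i : Fin 3, eval x (F i) * eval x (G i)


theorem mem_rtd (m : ℕ) (p : MvPolynomial (Fin 3) ℝ) :
    p ∈ restrictTotalDegree (Fin 3) ℝ m ↔ ∀ s, coeff s p ≠ 0 → s.degree ≤ m := by
  rw [mem_restrictTotalDegree, totalDegree, Finset.sup_le_iff]
  simp only [mem_support_iff]
  rfl

theorem card_rtd (m : ℕ) :
    Nat.card {n : Fin 3 →₀ ℕ | (n.sum fun _ e => e) ≤ m} = Nat.choose (m + 3) 3 := by
  classical
  have h : {n : Fin 3 →₀ ℕ | (n.sum fun _ e => e) ≤ m} =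
      (((Finset.range (m + 1)).biUnion fun j =>
        Finset.finsuppAntidiag (Finset.univ : Finset (Fin 3)) j : Finset (Fin 3 →₀ ℕ)) :
          Set (Fin 3 →₀ ℕ)) := by
    ext n
    simp [Finset.mem_finsuppAntidiag, Finsupp.sum_fintype]
  rw [h, Nat.card_coe_set_eq, Set.ncard_coe_finset, Finset.card_biUnion]
  · simp only [Finset.card_finsuppAntidiag_nat_eq_choose]
    induction m with
    | zero => simp
    | succ m ih =>
      rw [Finset.sum_range_succ, ih]
      · simp
        have : Nat.choose (m + 1 + 3) 3 = Nat.choose (m+3) 2 + Nat.choose (m+3) 3 :=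
          Nat.choose_succ_succ' _ _
        rw [this, show 3 + m = m + 3 by omega,
          ← Nat.choose_symm (show 2 ≤ m + 3 by omega), show m + 3 - 2 = m + 1 by omega]
        omega
      · ext n
        simp [Finset.mem_finsuppAntidiag, Finsupp.sum_fintype]
  · intro i _ j _ hij
    rw [Function.onFun, Finset.disjoint_left]
    intro a ha hb
    simp [Finset.mem_finsuppAntidiag] at ha hb
    omega

theorem finrank_rtd (m : ℕ) :
    Module.finrank ℝ (restrictTotalDegree (Fin 3) ℝ m) = Nat.choose (m + 3) 3 := by
  rw [← card_rtd]
  exact Module.finrank_eq_nat_card_basis (basisRestrictSupport ℝ _)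

theorem mem_Pvec (m : ℕ) (F : Fin 3 → MvPolynomial (Fin 3) ℝ) :
    F ∈ Pvec m ↔ ∀ i, F i ∈ restrictTotalDegree (Fin 3) ℝ m := by
  simp [Pvec, Submodule.mem_pi]

noncomputable def PvecEquiv (m : ℕ) :
    Pvec m ≃ₗ[ℝ] (Fin 3 → restrictTotalDegree (Fin 3) ℝ m) where
  toFun F i := ⟨F.1 i, (mem_Pvec m F.1).1 F.2 i⟩
  invFun G := ⟨fun i => (G i).1, (mem_Pvec m _).2 fun i => (G i).2⟩
  map_add' _ _ := rfl
  map_smul' _ _ := rfl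
  left_inv _ := rfl
  right_inv _ := rfl

instance Pvec_fin (m : ℕ) : Module.Finite ℝ (Pvec m) := Module.Finite.equiv (PvecEquiv m).symm

theorem finrank_Pvec (m : ℕ) : Module.finrank ℝ (Pvec m) = 3 * Nat.choose (m + 3) 3 := by
  rw [(PvecEquiv m).finrank_eq, Module.finrank_pi_fintype]
  simp [finrank_rtd]

/-- scaling each monomial according to its degree -/
noncomputable def sc (f : ℕ → ℝ) : MvPolynomial (Fin 3) ℝ →ₗ[ℝ] MvPolynomial (Fin 3) ℝ :=
  (basisMonomials (Fin 3) ℝ).constr ℝ fun s => monomial s (f s.degree)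

theorem sc_monomial (f : ℕ → ℝ) (s : Fin 3 →₀ ℕ) (a : ℝ) :
    sc f (monomial s a) = monomial s (f s.degree * a) := by
  have h : monomial s a = a • basisMonomials (Fin 3) ℝ s := by simp [smul_monomial]
  rw [h, map_smul, sc, Module.Basis.constr_basis, smul_monomial, smul_eq_mul, mul_comm]

theorem coeff_sc (f : ℕ → ℝ) (p : MvPolynomial (Fin 3) ℝ) (s : Fin 3 →₀ ℕ) :
    coeff s (sc f p) = f s.degree * coeff s p := by
  classical
  induction p using MvPolynomial.induction_on' with
  | add p q hp hq => simp [hp, hq, mul_add]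
  | monomial u a =>
    rw [sc_monomial, coeff_monomial, coeff_monomial]
    split_ifs with h
    · rw [h]
    · simp

theorem sc_mem (f : ℕ → ℝ) {m : ℕ} {p : MvPolynomial (Fin 3) ℝ}
    (hp : p ∈ restrictTotalDegree (Fin 3) ℝ m) : sc f p ∈ restrictTotalDegree (Fin 3) ℝ m := by
  rw [mem_rtd] at hp ⊢
  intro s hs
  rw [coeff_sc] at hs
  exact hp s (right_ne_zero_of_mul hs)

theorem pderiv_sc (f : ℕ → ℝ) (i : Fin 3) (p : MvPolynomial (Fin 3) ℝ) :
    pderiv i (sc f p) = sc (fun n => f (n + 1)) (pderiv i p) := by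
  ext s
  rw [coeff_pderiv, coeff_sc, coeff_sc, coeff_pderiv]
  simp
  ring

theorem coeff_euler (p : MvPolynomial (Fin 3) ℝ) (s : Fin 3 →₀ ℕ) :
    coeff s (∑ i, X i * pderiv i p) = s.degree * coeff s p := by
  classical
  induction p using MvPolynomial.induction_on' with
  | add p q hp hq => simp only [map_add, mul_add, Finset.sum_add_distrib, coeff_add, hp, hq]
  | monomial u a =>
    simp only [X_mul_pderiv_monomial, coeff_sum, coeff_smul, coeff_monomial]
    split_ifs with h
    · subst h
      simp [Finsupp.degree_eq_sum, Finset.sum_mul]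
    · simp

theorem pderiv_mem {m : ℕ} (i : Fin 3) {p : MvPolynomial (Fin 3) ℝ}
    (hp : p ∈ restrictTotalDegree (Fin 3) ℝ (m + 1)) :
    pderiv i p ∈ restrictTotalDegree (Fin 3) ℝ m := by
  rw [mem_rtd] at hp ⊢
  intro s hs
  rw [coeff_pderiv] at hs
  have := hp _ (left_ne_zero_of_mul hs)
  simp at this
  omega

theorem X_mul_mem {m : ℕ} (i : Fin 3) {p : MvPolynomial (Fin 3) ℝ}
    (hp : p ∈ restrictTotalDegree (Fin 3) ℝ m) :
    X i * p ∈ restrictTotalDegree (Fin 3) ℝ (m + 1) := by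
  rw [mem_restrictTotalDegree] at hp ⊢
  refine (totalDegree_mul _ _).trans ?_
  rw [totalDegree_X]
  omega

theorem curl_eq (F : Fin 3 → MvPolynomial (Fin 3) ℝ) :
    curlLM F = ![pderiv 1 (F 2) - pderiv 2 (F 1), pderiv 2 (F 0) - pderiv 0 (F 2),
      pderiv 0 (F 1) - pderiv 1 (F 0)] := by
  ext1 i
  fin_cases i <;> rfl

theorem grad_eq (p : MvPolynomial (Fin 3) ℝ) (i : Fin 3) : gradLM p i = pderiv i p := rfl

theorem pderiv_comm' (i j : Fin 3) (p : MvPolynomial (Fin 3) ℝ) :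
    pderiv i (pderiv j p) = pderiv j (pderiv i p) := by
  ext s
  simp only [coeff_pderiv]
  by_cases h : i = j
  · subst h; rfl
  · have h' : j ≠ i := fun e => h e.symm
    simp [h, h', add_right_comm]
    ring

theorem curl_grad (p : MvPolynomial (Fin 3) ℝ) : curlLM (gradLM p) = 0 := by
  rw [curl_eq]
  simp only [grad_eq]
  ext1 i
  fin_cases i
  · exact sub_eq_zero.2 (pderiv_comm' _ _ _)
  · exact sub_eq_zero.2 (pderiv_comm' _ _ _)
  · exact sub_eq_zero.2 (pderiv_comm' _ _ _)

theorem curl_zero_symm {F : Fin 3 → MvPolynomial (Fin 3) ℝ} (h : curlLM F = 0) (i j : Fin 3) :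
    pderiv i (F j) = pderiv j (F i) := by
  rw [curl_eq] at h
  have h0 : pderiv 1 (F 2) - pderiv 2 (F 1) = 0 := congrFun h 0
  have h1 : pderiv 2 (F 0) - pderiv 0 (F 2) = 0 := congrFun h 1
  have h2 : pderiv 0 (F 1) - pderiv 1 (F 0) = 0 := congrFun h 2
  rw [sub_eq_zero] at h0 h1 h2
  fin_cases i <;> fin_cases j <;> first | rfl | assumption | (symm; assumption)

theorem poincare {m : ℕ} {F : Fin 3 → MvPolynomial (Fin 3) ℝ} (hF : F ∈ Pvec m)
    (h : curlLM F = 0) : ∃ p ∈ restrictTotalDegree (Fin 3) ℝ (m + 1), gradLM p = F := by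
  set f : ℕ → ℝ := fun n => ((n : ℝ) + 1)⁻¹ with hf
  refine ⟨∑ j, X j * sc f (F j), Submodule.sum_mem _ fun j _ =>
    X_mul_mem j (sc_mem f ((mem_Pvec m F).1 hF j)), ?_⟩
  ext1 i
  rw [grad_eq, map_sum]
  have h1 : ∀ j, pderiv i (X j * sc f (F j)) =
      (if j = i then sc f (F j) else 0) + X j * pderiv j (sc f (F i)) := by
    intro j
    rw [pderiv_mul, pderiv_sc, pderiv_sc, curl_zero_symm h i j]
    split_ifs with hij
    · subst hij; simp
    · rw [pderiv_X_of_ne hij]; simp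
  simp only [h1, Finset.sum_add_distrib]
  ext s
  rw [coeff_add, coeff_euler]
  simp only [Finset.sum_ite_eq', Finset.mem_univ, if_true, coeff_sc, hf]
  have : (s.degree : ℝ) + 1 ≠ 0 := by positivity
  field_simp
  ring

theorem grad_zero {p : MvPolynomial (Fin 3) ℝ} (h : gradLM p = 0) : p = C (coeff 0 p) := by
  classical
  ext s
  have := coeff_euler p s
  have h0 : ∀ i, pderiv i p = 0 := fun i => congrFun h i
  simp only [h0, mul_zero, Finset.sum_const_zero, coeff_zero] at this
  rw [coeff_C]
  split_ifs with hs
  · rw [hs]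
  · rcases mul_eq_zero.1 this.symm with h2 | h2
    · rw [Nat.cast_eq_zero, Finsupp.degree_eq_zero_iff] at h2
      exact absurd h2.symm hs
    · exact h2

theorem finrank_curl (k : ℕ) :
    Module.finrank ℝ ((Pvec (k + 1)).map curlLM) + Nat.choose (k + 2 + 3) 3
      = 3 * Nat.choose (k + 1 + 3) 3 + 1 := by
  have e1 := LinearMap.finrank_range_add_finrank_ker (curlLM.domRestrict (Pvec (k + 1)))
  have e2 := LinearMap.finrank_range_add_finrank_ker
    (gradLM.domRestrict (restrictTotalDegree (Fin 3) ℝ (k + 2)))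
  rw [finrank_Pvec, LinearMap.range_domRestrict] at e1
  rw [finrank_rtd] at e2
  have e3 : (LinearMap.ker (curlLM.domRestrict (Pvec (k + 1)))).map (Pvec (k + 1)).subtype =
      LinearMap.range (gradLM.domRestrict (restrictTotalDegree (Fin 3) ℝ (k + 2))) := by
    ext F
    simp only [Submodule.mem_map, LinearMap.mem_ker, LinearMap.mem_range]
    constructor
    · rintro ⟨⟨G, hG⟩, h, rfl⟩
      obtain ⟨p, hp, h'⟩ := poincare hG h
      exact ⟨⟨p, hp⟩, h'⟩
    · rintro ⟨⟨p, hp⟩, rfl⟩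
      exact ⟨⟨gradLM p, (mem_Pvec _ _).2 fun i => pderiv_mem i hp⟩, curl_grad p, rfl⟩
  have e4 : (LinearMap.ker (gradLM.domRestrict (restrictTotalDegree (Fin 3) ℝ (k + 2)))).map
      (restrictTotalDegree (Fin 3) ℝ (k + 2)).subtype = Submodule.span ℝ {1} := by
    ext p
    simp only [Submodule.mem_map, LinearMap.mem_ker, Submodule.mem_span_singleton]
    constructor
    · rintro ⟨⟨p, hp⟩, h, rfl⟩
      refine ⟨coeff 0 p, ?_⟩
      rw [smul_eq_C_mul, mul_one]
      exact (grad_zero h).symm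
    · rintro ⟨a, rfl⟩
      refine ⟨⟨a • 1, Submodule.smul_mem _ _ ?_⟩, ?_, rfl⟩
      · rw [mem_restrictTotalDegree]; simp
      · change gradLM (a • 1) = 0
        ext1 i
        rw [map_smul, Pi.smul_apply, grad_eq, pderiv_one]; simp
  have e5 := Submodule.finrank_map_subtype_eq (Pvec (k + 1))
    (LinearMap.ker (curlLM.domRestrict (Pvec (k + 1))))
  have e6 := Submodule.finrank_map_subtype_eq (restrictTotalDegree (Fin 3) ℝ (k + 2))
    (LinearMap.ker (gradLM.domRestrict (restrictTotalDegree (Fin 3) ℝ (k + 2))))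
  rw [e3] at e5
  rw [e4, finrank_span_singleton one_ne_zero] at e6
  omega

theorem integrable_poly {K : Set (Fin 3 → ℝ)} (hKb : Bornology.IsBounded K)
    (f : (Fin 3 → ℝ) → ℝ) (hf : Continuous f) : IntegrableOn f K :=
  (hf.continuousOn.integrableOn_compact hKb.isCompact_closure).mono_set subset_closure

theorem cont_ip (F G : Fin 3 → MvPolynomial (Fin 3) ℝ) :
    Continuous fun x : Fin 3 → ℝ => ∑ i : Fin 3, eval x (F i) * eval x (G i) :=
  continuous_finsetSum _ fun _ _ => (continuous_eval _).mul (continuous_eval _)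

theorem ipK_comm (K : Set (Fin 3 → ℝ)) (F G : Fin 3 → MvPolynomial (Fin 3) ℝ) :
    ipK K F G = ipK K G F := by
  simp only [ipK, mul_comm]

theorem ipK_add {K : Set (Fin 3 → ℝ)} (hKb : Bornology.IsBounded K)
    (F F' G : Fin 3 → MvPolynomial (Fin 3) ℝ) :
    ipK K (F + F') G = ipK K F G + ipK K F' G := by
  simp only [ipK]
  rw [← integral_add (integrable_poly hKb _ (cont_ip F G)) (integrable_poly hKb _ (cont_ip F' G))]
  simp [add_mul, Finset.sum_add_distrib]

theorem ipK_smul (K : Set (Fin 3 → ℝ)) (c : ℝ)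
    (F G : Fin 3 → MvPolynomial (Fin 3) ℝ) :
    ipK K (c • F) G = c * ipK K F G := by
  simp only [ipK]
  rw [← integral_const_mul]
  simp only [Pi.smul_apply, smul_eval, Finset.mul_sum, mul_assoc]

theorem poly_zero_of_open {K : Set (Fin 3 → ℝ)} (hKo : IsOpen K) (hKne : K.Nonempty)
    (p : MvPolynomial (Fin 3) ℝ) (h : ∀ x ∈ K, eval x p = 0) : p = 0 := by
  obtain ⟨x, hx⟩ := hKne
  obtain ⟨ε, hε, hb⟩ := Metric.isOpen_iff.1 hKo x hx
  refine funext_set (fun i => Metric.ball (x i) ε) (fun i => ?_) fun y hy => ?_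
  · rw [Real.ball_eq_Ioo]
    exact Set.Ioo_infinite (by linarith)
  · rw [map_zero]
    refine h y (hb ?_)
    rw [ball_pi x hε]
    exact hy

theorem ipK_self_zero {K : Set (Fin 3 → ℝ)} (hKo : IsOpen K) (hKne : K.Nonempty)
    (hKb : Bornology.IsBounded K) (F : Fin 3 → MvPolynomial (Fin 3) ℝ)
    (h : ipK K F F = 0) : F = 0 := by
  have hn : ∀ x : Fin 3 → ℝ, 0 ≤ ∑ i : Fin 3, eval x (F i) * eval x (F i) := fun x =>
    Finset.sum_nonneg fun i _ => mul_self_nonneg _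
  rw [ipK, integral_eq_zero_iff_of_nonneg hn (integrable_poly hKb _ (cont_ip F F))] at h
  have h2 := Measure.eqOn_open_of_ae_eq h hKo (cont_ip F F).continuousOn continuousOn_const
  ext1 i
  refine poly_zero_of_open hKo hKne _ fun x hx => ?_
  have h3 : ∑ i : Fin 3, eval x (F i) * eval x (F i) = 0 := h2 hx
  rw [Finset.sum_eq_zero_iff_of_nonneg fun i _ => mul_self_nonneg _] at h3
  exact mul_self_eq_zero.1 (h3 i (Finset.mem_univ _))

/-- The inner product as a bilinear form on `P_k³`. -/
noncomputable def ipB (k : ℕ) (K : Set (Fin 3 → ℝ)) (hKb : Bornology.IsBounded K) :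
    LinearMap.BilinForm ℝ (Pvec k) :=
  LinearMap.mk₂ ℝ (fun F G => ipK K F.1 G.1)
    (fun F F' G => ipK_add hKb _ _ _)
    (fun c F G => ipK_smul K c _ _)
    (fun F G G' => by
      rw [ipK_comm, ipK_comm K F.1 G.1, ipK_comm K F.1 G'.1]; exact ipK_add hKb _ _ _)
    (fun c F G => by rw [ipK_comm, ipK_comm K F.1 G.1]; exact ipK_smul K c _ _)

/-- On a nonempty bounded open set `K ⊆ ℝ³`, the set
`{ r ∈ P_k³ : (r, curl v)_K = 0 for all v ∈ P_{k+1}³ }` is a linear subspace of `P_k³`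
of dimension `3·d_k − 3·d_{k+1} + d_{k+2} − 1` (stated additively), `d_j = C(j+3,3)`. -/
theorem stmt6 (k : ℕ) (K : Set (Fin 3 → ℝ)) (hKo : IsOpen K) (hKne : K.Nonempty)
    (hKb : Bornology.IsBounded K) :
    ∃ S : Submodule ℝ (Fin 3 → MvPolynomial (Fin 3) ℝ),
      (S : Set (Fin 3 → MvPolynomial (Fin 3) ℝ))
        = {r | r ∈ Pvec k ∧ ∀ v ∈ Pvec (k + 1), ipK K r (curlLM v) = 0} ∧
      S ≤ Pvec k ∧
      Module.finrank ℝ S + 3 * Nat.choose (k + 1 + 3) 3 + 1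
        = 3 * Nat.choose (k + 3) 3 + Nat.choose (k + 2 + 3) 3 := by
  set B := ipB k K hKb with hB
  have hBa : ∀ F G, B F G = ipK K F.1 G.1 := fun F G => rfl
  have hnd : B.Nondegenerate := by
    constructor
    · intro F hF
      exact Subtype.ext (ipK_self_zero hKo hKne hKb _ (hF F))
    · intro F hF
      exact Subtype.ext (ipK_self_zero hKo hKne hKb _ (hF F))
  have hle : (Pvec (k + 1)).map curlLM ≤ Pvec k := by
    rintro _ ⟨v, hv, rfl⟩
    have hv' := (mem_Pvec _ _).1 hv
    rw [mem_Pvec, curl_eq]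
    intro i
    fin_cases i <;> exact Submodule.sub_mem _ (pderiv_mem _ (hv' _)) (pderiv_mem _ (hv' _))
  set W : Submodule ℝ (Pvec k) := ((Pvec (k + 1)).map curlLM).comap (Pvec k).subtype with hW
  have hfW : Module.finrank ℝ W = Module.finrank ℝ ((Pvec (k + 1)).map curlLM) :=
    (Submodule.comapSubtypeEquivOfLe hle).finrank_eq
  refine ⟨(B.orthogonal W).map (Pvec k).subtype, ?_, Submodule.map_subtype_le _ _, ?_⟩
  · ext r
    constructor
    · rintro ⟨⟨r, hr⟩, h, rfl⟩
      refine ⟨hr, fun v hv => ?_⟩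
      have hm : curlLM v ∈ (Pvec (k + 1)).map curlLM := ⟨v, hv, rfl⟩
      rw [ipK_comm]
      exact h ⟨curlLM v, hle hm⟩ hm
    · rintro ⟨hr, h⟩
      refine ⟨⟨r, hr⟩, ?_, rfl⟩
      rintro ⟨w, hw⟩ ⟨v, hv, hvw⟩
      change ipK K w r = 0
      rw [ipK_comm]
      have := h v hv
      rwa [hvw] at this
  · rw [Submodule.finrank_map_subtype_eq]
    have h1 := LinearMap.BilinForm.finrank_orthogonal hnd W
    have h2 := finrank_curl k
    have h3 := Submodule.finrank_le W
    rw [finrank_Pvec] at h1 h3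
    omega
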